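/- Let □ := ∂_t² − Δ be the discrete d'Alembert operator on ℤ^d. Then every u ∈ C²([0,T]; ℓ²(ℤ^d)) satisfies, for all t ∈ [0,T], the sharp energy estimate ‖u'(·,t)‖_{ℓ²(ℤ^d)} ≤ ‖u'(·,0)‖_{ℓ²(ℤ^d)} + ∫_0^t ‖□u(·,s)‖_{ℓ²(ℤ^d)} ds, where ‖u'(·,t)‖_{ℓ²(ℤ^d)}² := Σ_{m∈ℤ^d} ( |∂_t u(m,t)|² + Σ_{j=1}^d |∂_j u(m,t)|² ). -/

import Mathlib

/-!
The energy estimate is the classical one, once the `ℓ²` norm of `∂ⱼu` is understood.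

The kernel of `∂ⱼ` is `i K(a)` along the `j`-th axis, where `K` is even and `π K(a)` is the
difference `h(a + 1) - h(a)` of the discrete Hilbert kernel `h(a) = 1 / (a - 1/2)`. Since
`h ∗ h = -π² δ₁` (partial fractions and telescoping off the diagonal, `∑ 1/(2n+1)² = π²/8` on it:
`hasSum_hh_conv`), `K ∗ K` is minus the one-dimensional discrete Laplacian (`hasSum_KK_conv`).
As `∂ⱼ` is an absolutely convergent series of translations of `ℓ²`, expanding the square gives
`‖∂ⱼ f‖ = ‖f(· - eⱼ) - f‖` (`tsum_pd_sq`). The energy is therefore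
`E = ‖∂ₜu‖² + ∑ⱼ ‖u(· - eⱼ) - u‖²`, which involves bounded operators only.

Summation by parts gives `E' = 2 Re ⟨∂ₜu, □u⟩ ≤ 2 √E ‖□u‖` (`hasDerivWithinAt_energy`), so
`√(E + ε²)` has derivative at most `‖□u‖`; integrating and letting `ε → 0` gives the estimate
(`sqrt_energy_le`).
-/

open scoped BigOperators ENNReal NNReal
open MeasureTheory Filter

noncomputable section

/-- Kernel `φⱼ` of the discrete partial derivative on `ℤ^d`:
`φⱼ(m) = -4i/(π(4a²-1))` if `m = a·eⱼ`, and `0` otherwise. -/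
def phi (d : ℕ) (j : Fin d) (m : Fin d → ℤ) : ℂ :=
  if ∀ i, i ≠ j → m i = 0 then
    (-4 * Complex.I) / ((Real.pi : ℂ) * (4 * (m j : ℂ) ^ 2 - 1))
  else 0

/-- Discrete convolution on `ℤ^d`. -/
def dconv {d : ℕ} (u v : (Fin d → ℤ) → ℂ) (k : Fin d → ℤ) : ℂ :=
  ∑' m, u m * v (k - m)

/-- Discrete partial derivative `∂ⱼ u = u ∗ φⱼ`. -/
def pd {d : ℕ} (j : Fin d) (u : (Fin d → ℤ) → ℂ) : (Fin d → ℤ) → ℂ :=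
  dconv u (phi d j)

/-- Japanese bracket `⟨m⟩ = (1+|m|²)^{1/2}`. -/
def jap {d : ℕ} (m : Fin d → ℤ) : ℝ :=
  Real.sqrt (1 + ∑ i, ((m i : ℝ)) ^ 2)

open scoped Classical in
/-- `ℓ^p` norm on `ℤ^d` (valued in `ℝ≥0∞`), `1 ≤ p ≤ ∞`. -/
def lpn {d : ℕ} (p : ℝ≥0∞) (f : (Fin d → ℤ) → ℂ) : ℝ≥0∞ :=
  if p = ⊤ then ⨆ m, (‖f m‖₊ : ℝ≥0∞)
  else (∑' m, (‖f m‖₊ : ℝ≥0∞) ^ p.toReal) ^ (1 / p.toReal)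

/-- Weighted `ℓ^{2,k}` norm: the `ℓ²` norm of `m ↦ ⟨m⟩^k f(m)`. -/
def w2 {d : ℕ} (k : ℕ) (f : (Fin d → ℤ) → ℂ) : ℝ≥0∞ :=
  lpn 2 (fun m => ((jap m ^ k : ℝ) : ℂ) * f m)

/-- Discrete Laplacian on `ℤ^d`. -/
def lap {d : ℕ} (u : (Fin d → ℤ) → ℂ) (x : Fin d → ℤ) : ℂ :=
  ∑ j, (u (x + Pi.single j 1) + u (x - Pi.single j 1) - 2 * u x)

/-- Continuity of a curve `t ↦ f(·,t)` into `ℓ^{2,k}(ℤ^d)` on a set `S` of times. -/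
def ContW {d : ℕ} (k : ℕ) (S : Set ℝ) (f : ℝ → (Fin d → ℤ) → ℂ) : Prop :=
  ∀ t ∈ S, Tendsto (fun s => w2 k (fun m => f s m - f t m))
    (nhdsWithin t S) (nhds (0 : ℝ≥0∞))

/-- `f'` is the derivative (in the `ℓ^{2,k}(ℤ^d)` norm) of the curve `t ↦ f(·,t)` on `S`. -/
def DerivW {d : ℕ} (k : ℕ) (S : Set ℝ) (f f' : ℝ → (Fin d → ℤ) → ℂ) : Prop :=
  ∀ t ∈ S, Tendsto
    (fun s => w2 k (fun m => (s - t)⁻¹ • (f s m - f t m) - f' t m))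
    (nhdsWithin t (S \ {t})) (nhds (0 : ℝ≥0∞))

/-- `u ∈ C²(S; ℓ^{2,k}(ℤ^d))`, with first and second time derivatives `u1`, `u2`. -/
structure IsC2 {d : ℕ} (k : ℕ) (S : Set ℝ) (u u1 u2 : ℝ → (Fin d → ℤ) → ℂ) : Prop where
  mem0 : ∀ t ∈ S, w2 k (u t) < ⊤
  mem1 : ∀ t ∈ S, w2 k (u1 t) < ⊤
  mem2 : ∀ t ∈ S, w2 k (u2 t) < ⊤
  cont0 : ContW k S u
  cont1 : ContW k S u1
  cont2 : ContW k S u2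
  hder1 : DerivW k S u u1
  hder2 : DerivW k S u1 u2

/-! ### The kernel and its convolution square -/

/-- The kernel `1 / (a - 1/2) = 2 / (2a - 1)` of the discrete Hilbert transform on `ℤ`. -/
def hh (a : ℤ) : ℝ := 2 / (2 * (a : ℝ) - 1)

/-- The real, even kernel on `ℤ` with `φⱼ(a eⱼ) = i K(a)`. -/
def KK (a : ℤ) : ℝ := -4 / (Real.pi * (4 * (a : ℝ) ^ 2 - 1))

lemma half_ne (a : ℤ) : 2 * (a : ℝ) - 1 ≠ 0 := by
  intro h
  have : (2 * a : ℝ) = 1 := by linarith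
  have : (2 * a : ℤ) = 1 := by exact_mod_cast this
  omega

lemma hasSum_odd : HasSum (fun n : ℕ => 1 / (2 * (n : ℝ) + 1) ^ 2) (Real.pi ^ 2 / 8) := by
  have h := hasSum_zeta_two
  generalize hp : Real.pi ^ 2 = P at h ⊢
  have he : HasSum (fun n : ℕ => (1 : ℝ) / ((2 * n : ℕ) : ℝ) ^ 2) (P / 24) := by
    have h1 := h.mul_left (1 / 4)
    rw [show (1 / 4 : ℝ) * (P / 6) = P / 24 by ring] at h1
    refine h1.congr_fun (fun n => ?_)
    push_cast
    rw [mul_pow, ← one_div_mul_one_div]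
    norm_num
  have hi : Function.Injective (fun n : ℕ => 2 * n + 1) := fun a b hab => by
    simpa using hab
  have hs : Summable (fun n : ℕ => (1 : ℝ) / ((2 * n + 1 : ℕ) : ℝ) ^ 2) :=
    h.summable.comp_injective hi
  have h2 : P / 24 + ∑' n : ℕ, (1 : ℝ) / ((2 * n + 1 : ℕ) : ℝ) ^ 2 = P / 6 :=
    HasSum.unique (HasSum.even_add_odd (f := fun n : ℕ => (1 : ℝ) / (n : ℝ) ^ 2) he hs.hasSum) h
  have h3 := hs.hasSum
  rw [show ∑' n : ℕ, (1 : ℝ) / ((2 * n + 1 : ℕ) : ℝ) ^ 2 = P / 8 by linarith] at h3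
  simpa only [Nat.cast_add, Nat.cast_mul, Nat.cast_ofNat, Nat.cast_one] using h3

lemma hasSum_hh_sq : HasSum (fun a : ℤ => hh a ^ 2) (Real.pi ^ 2) := by
  have h4 := hasSum_odd.mul_left 4
  have key : HasSum (fun a : ℤ => hh (a + 1) ^ 2) (Real.pi ^ 2) := by
    have e : Real.pi ^ 2 = 4 * (Real.pi ^ 2 / 8) + 4 * (Real.pi ^ 2 / 8) := by ring
    rw [e]
    refine HasSum.of_nat_of_neg_add_one ?_ ?_
    · convert! h4 using 2 with n
      have : (2 * (n : ℝ) + 1) ≠ 0 := by positivity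
      have h2 := half_ne (n + 1)
      unfold hh
      push_cast at h2 ⊢
      field_simp
      ring
    · convert! h4 using 2 with n
      have : (2 * (n : ℝ) + 1) ≠ 0 := by positivity
      have h2 := half_ne (-(n + 1) + 1)
      unfold hh
      push_cast at h2 ⊢
      field_simp
      ring
  exact (Equiv.addRight (1 : ℤ)).hasSum_iff.mp key

lemma summable_hh_mul {f g : ℤ → ℤ} (hf : Function.Injective f) (hg : Function.Injective g) :
    Summable (fun a : ℤ => hh (f a) * hh (g a)) := by
  have h1 := hasSum_hh_sq.summable.comp_injective hf
  have h2 := hasSum_hh_sq.summable.comp_injective hg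
  refine Summable.of_norm_bounded (h1.add h2) (fun a => ?_)
  simp only [Function.comp_apply, Real.norm_eq_abs, abs_mul]
  nlinarith [sq_nonneg (|hh (f a)| - |hh (g a)|), sq_abs (hh (f a)), sq_abs (hh (g a)),
    sq_nonneg (hh (f a)), sq_nonneg (hh (g a))]

lemma tendsto_hh_nat : Tendsto (fun n : ℕ => hh n) atTop (nhds 0) := by
  have h : Tendsto (fun n : ℕ => (n : ℝ) + (-(1 / 2))) atTop atTop :=
    tendsto_atTop_add_const_right _ _ tendsto_natCast_atTop_atTop
  have := h.inv_tendsto_atTop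
  refine this.congr (fun n => ?_)
  simp only [hh, Pi.inv_apply]
  rw [← one_div, show (2 : ℝ) * ((n : ℤ) : ℝ) - 1 = 2 * ((n : ℝ) + -(1 / 2)) by push_cast; ring,
    ← div_div, div_self two_ne_zero]

lemma hh_reflect (a : ℤ) : hh (1 - a) = -hh a := by
  have h1 := half_ne a
  have h2 := half_ne (1 - a)
  unfold hh
  push_cast at h2 ⊢
  field_simp
  ring

lemma hasSum_hh_shift_one : HasSum (fun a : ℤ => hh (a + 1) - hh a) 0 := by
  have hs : Summable (fun a : ℤ => hh (a + 1) - hh a) := by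
    refine (summable_hh_mul (f := fun a => a + 1) (g := id) (add_left_injective 1)
      Function.injective_id).neg.congr (fun a => ?_)
    have h1 := half_ne a
    have h2 := half_ne (a + 1)
    simp only [id, hh]
    push_cast at h2 ⊢
    field_simp
    ring
  have e : (0 : ℝ) = -hh 0 + hh 0 := by ring
  rw [e]
  refine HasSum.of_nat_of_neg_add_one ?_ ?_
  · refine (hs.comp_injective
      (i := fun n : ℕ => (n : ℤ)) Nat.cast_injective).hasSum_iff_tendsto_nat.mpr ?_
    have : ∀ n : ℕ, ∑ i ∈ Finset.range n, (hh ((i : ℤ) + 1) - hh i) = hh n - hh 0 := by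
      intro n
      have := Finset.sum_range_sub (fun i : ℕ => hh i) n
      simpa using this
    simp only [Function.comp_def, this]
    simpa using tendsto_hh_nat.sub_const (hh 0)
  · have hi : Function.Injective (fun n : ℕ => -((n : ℤ) + 1)) := fun a b hab => by
      simpa using hab
    refine (hs.comp_injective hi).hasSum_iff_tendsto_nat.mpr ?_
    have : ∀ n : ℕ, ∑ i ∈ Finset.range n, (hh (-((i : ℤ) + 1) + 1) - hh (-((i : ℤ) + 1)))
        = hh 0 + hh (n + 1 : ℕ) := by
      intro n
      have := Finset.sum_range_sub' (fun i : ℕ => hh (-(i : ℤ))) n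
      have e2 : hh (n + 1 : ℕ) = -hh (-(n : ℤ)) := by
        rw [← hh_reflect]; congr 1; push_cast; ring
      rw [e2]
      simp only [Nat.cast_zero, neg_zero] at this
      rw [← sub_eq_add_neg, ← this]
      refine Finset.sum_congr rfl (fun i _ => ?_)
      push_cast
      congr 2
      ring
    simp only [Function.comp_def, this]
    simpa using ((tendsto_add_atTop_iff_nat 1).mpr tendsto_hh_nat).const_add (hh 0)

lemma hasSum_hh_shift (n : ℤ) : HasSum (fun a : ℤ => hh (a + n) - hh a) 0 := by
  have step : ∀ k : ℤ, HasSum (fun a : ℤ => hh (a + k + 1) - hh (a + k)) 0 := fun k =>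
    (Equiv.addRight k).hasSum_iff.mpr hasSum_hh_shift_one
  induction n using Int.induction_on with
  | zero => simp [hasSum_zero]
  | succ i ih =>
    have := ih.add (step i)
    rw [add_zero] at this
    convert! this using 2 with a
    rw [← add_assoc]; ring
  | pred i ih =>
    have := ih.sub (step (-i - 1))
    rw [sub_zero] at this
    convert! this using 2 with a
    rw [show a + (-(i : ℤ) - 1) + 1 = a + -i by ring]
    ring

/-- The discrete Hilbert kernel squares to a multiple of a delta function. Off the diagonal
partial fractions turn the sum into a telescoping one; on the diagonal it is `-∑ hh²`. -/
lemma hasSum_hh_conv (c : ℤ) :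
    HasSum (fun a : ℤ => hh a * hh (c - a)) (if c = 1 then -Real.pi ^ 2 else 0) := by
  split_ifs with hc
  · subst hc
    convert! hasSum_hh_sq.neg using 2 with a
    rw [hh_reflect]
    ring
  · have hc' : (c : ℝ) - 1 ≠ 0 := by
      intro h
      exact hc (by exact_mod_cast (sub_eq_zero.mp h))
    have := (hasSum_hh_shift (1 - c)).mul_left (-1 / ((c : ℝ) - 1))
    rw [mul_zero] at this
    convert! this using 2 with a
    have e : hh (a + (1 - c)) = -hh (c - a) := by
      rw [← hh_reflect]; congr 1; ring
    rw [e]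
    have h1 := half_ne a
    have h2 := half_ne (c - a)
    unfold hh
    push_cast at h2 ⊢
    field_simp
    ring

lemma KK_eq (a : ℤ) : KK a = 1 / Real.pi * (hh (a + 1) - hh a) := by
  have h1 := half_ne a
  have h2 := half_ne (a + 1)
  have h3 := Real.pi_ne_zero
  have h4 : 4 * (a : ℝ) ^ 2 - 1 = (2 * (a : ℝ) - 1) * (2 * ((a + 1 : ℤ) : ℝ) - 1) := by
    push_cast; ring
  unfold KK hh
  rw [h4]
  push_cast at h2 ⊢
  field_simp
  ring

lemma KK_neg (a : ℤ) : KK (-a) = KK a := by simp [KK]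

lemma summable_KK : Summable KK :=
  (hasSum_hh_shift_one.summable.mul_left (1 / Real.pi)).congr (fun a => (KK_eq a).symm)

/-- `K ∗ K` is minus the one-dimensional discrete Laplacian. -/
lemma hasSum_KK_conv (c : ℤ) :
    HasSum (fun a : ℤ => KK a * KK (c - a))
      ((if c = 0 then 2 else 0) - (if c = 1 then 1 else 0) - (if c = -1 then 1 else 0)) := by
  have hP := hasSum_hh_conv
  have sh : ∀ k : ℤ, HasSum (fun a : ℤ => hh (a + 1) * hh (k - a))
      (if k + 1 = 1 then -Real.pi ^ 2 else 0) := by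
    intro k
    have := (Equiv.addRight (1 : ℤ)).hasSum_iff.mpr (hP (k + 1))
    convert! this using 2 with a
    simp
  have h := ((((sh (c + 1)).sub (sh c)).sub (hP (c + 1))).add (hP c)).mul_left (1 / Real.pi ^ 2)
  convert! h using 1
  · ext a
    rw [KK_eq, KK_eq, show c - a + 1 = c + 1 - a by ring]
    ring
  · have h3 := Real.pi_ne_zero
    have i1 : c + 1 + 1 = 1 ↔ c = -1 := by omega
    have i2 : c + 1 = 1 ↔ c = 0 := by omega
    simp only [i1, i2]
    split_ifs <;> first | omega | (field_simp; try ring)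

/-! ### The `ℓ²` norm of the discrete derivative -/

/-- For a stationary sequence of vectors the norm of `∑ K(a) F(a)` is that of a difference,
because `K ∗ K` is minus the discrete Laplacian. -/
lemma norm_sq_tsum_KK {H : Type*} [NormedAddCommGroup H] [InnerProductSpace ℂ H]
    [CompleteSpace H] (F : ℤ → H) (C : ℝ) (hC : ∀ a, ‖F a‖ = C)
    (hF : ∀ a b, inner ℂ (F a) (F b) = inner ℂ (F 0) (F (b - a))) :
    ‖∑' a, (KK a : ℂ) • F a‖ ^ 2 = ‖F 1 - F 0‖ ^ 2 := by
  set G : ℤ → ℂ := fun c => inner ℂ (F 0) (F c) with hG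
  have hKn : Summable (fun a => ‖(KK a : ℂ)‖) := by
    simpa using summable_KK.norm
  have hGb : ∀ c, ‖G c‖ ≤ C * C := fun c => by
    have := norm_inner_le_norm (𝕜 := ℂ) (F 0) (F c)
    rwa [hC, hC] at this
  have hs : Summable (fun a => (KK a : ℂ) • F a) := by
    refine Summable.of_norm ?_
    simp only [norm_smul, hC]
    exact hKn.mul_right C
  set w := ∑' a, (KK a : ℂ) • F a with hw
  have h1 : ∀ x : H, inner ℂ x w = ∑' b, (KK b : ℂ) * inner ℂ x (F b) := by
    intro x
    have := (innerSL ℂ x).map_tsum hs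
    simp only [innerSL_apply_apply, inner_smul_right] at this
    exact this
  have h2 : inner ℂ w w = ∑' a, (KK a : ℂ) * inner ℂ (F a) w := by
    rw [← inner_conj_symm w w, h1 w, Complex.conj_tsum]
    refine tsum_congr (fun a => ?_)
    simp
  have hs2 : Summable (fun p : ℤ × ℤ => (KK p.1 : ℂ) * (KK (p.1 + p.2) : ℂ) * G p.2) := by
    have hp : Summable (fun p : ℤ × ℤ => ‖(KK p.1 : ℂ) * (KK p.2 : ℂ)‖) :=
      Summable.mul_norm (f := fun a => (KK a : ℂ)) (g := fun a => (KK a : ℂ)) hKn hKn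
    have hinj : Function.Injective (fun p : ℤ × ℤ => (p.1, p.1 + p.2)) := by
      rintro ⟨a, b⟩ ⟨c, e⟩ h
      simp only [Prod.mk.injEq] at h
      obtain ⟨rfl, h⟩ := h
      simpa using h
    refine Summable.of_norm_bounded ((hp.comp_injective hinj).mul_right (C * C)) (fun p => ?_)
    simp only [Function.comp_apply]
    rw [norm_mul]
    exact mul_le_mul_of_nonneg_left (hGb _) (norm_nonneg _)
  have h3 : inner ℂ w w = ∑' a, ∑' c, (KK a : ℂ) * (KK (a + c) : ℂ) * G c := by
    rw [h2]
    refine tsum_congr (fun a => ?_)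
    rw [h1, ← tsum_mul_left, ← (Equiv.addLeft a).tsum_eq]
    refine tsum_congr (fun c => ?_)
    rw [hF]
    simp [hG, mul_assoc]
  have h4 : inner ℂ w w = 2 * G 0 - G 1 - G (-1) := by
    rw [h3, ← Summable.tsum_comm (f := fun a c : ℤ => (KK a : ℂ) * (KK (a + c) : ℂ) * G c) hs2]
    have : ∀ c, ∑' a, (KK a : ℂ) * (KK (a + c) : ℂ) * G c =
        ((((if c = 0 then 2 else 0) - (if c = 1 then 1 else 0)
          - (if c = -1 then 1 else 0) : ℝ)) : ℂ) * G c := by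
      intro c
      rw [tsum_mul_right]
      congr 1
      have h5 := (hasSum_KK_conv (-c)).tsum_eq
      rw [show (fun a : ℤ => KK a * KK (-c - a)) = fun a => KK a * KK (a + c) by
        ext a; rw [← KK_neg (a + c)]; congr 2; ring] at h5
      simp only [← Complex.ofReal_mul, ← Complex.ofReal_tsum, h5]
      congr 1
      have i1 : -c = 1 ↔ c = -1 := by omega
      simp only [i1, neg_eq_zero, neg_inj]
      ring
    simp only [this]
    rw [tsum_eq_sum (s := {0, 1, -1})]
    · simp
      ring
    · intro c hc
      simp only [Finset.mem_insert, Finset.mem_singleton, not_or] at hc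
      simp [hc]
  have h6 : inner ℂ (F 1 - F 0) (F 1 - F 0) = 2 * G 0 - G 1 - G (-1) := by
    simp only [inner_sub_left, inner_sub_right]
    rw [hF 1 1, hF 1 0]
    simp only [hG, sub_self, zero_sub]
    ring
  have h7 := h4.trans h6.symm
  rw [inner_self_eq_norm_sq_to_K, inner_self_eq_norm_sq_to_K] at h7
  exact_mod_cast h7

/-- The Hilbert space `ℓ²(ℤ^d)`. -/
abbrev L2 (d : ℕ) := lp (fun _ : Fin d → ℤ => ℂ) 2

lemma memL2_iff {d : ℕ} (f : (Fin d → ℤ) → ℂ) :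
    Memℓp f 2 ↔ Summable (fun m => ‖f m‖ ^ 2) := by
  rw [memℓp_gen_iff (by norm_num)]
  simp

lemma L2_summable {d : ℕ} (f : L2 d) : Summable (fun m => ‖f m‖ ^ 2) :=
  (memL2_iff _).mp f.2

lemma L2_norm_sq {d : ℕ} (f : L2 d) : ‖f‖ ^ 2 = ∑' m, ‖f m‖ ^ 2 := by
  have := lp.norm_rpow_eq_tsum (p := 2) (by norm_num) f
  simpa using this

lemma memL2_transl {d : ℕ} (v : Fin d → ℤ) (f : L2 d) : Memℓp (fun m => f (m - v)) 2 := by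
  rw [memL2_iff]
  exact (L2_summable f).comp_injective (sub_left_injective (b := v))

lemma norm_transl {d : ℕ} (v : Fin d → ℤ) (f : L2 d) :
    ‖(⟨fun m => f (m - v), memL2_transl v f⟩ : L2 d)‖ = ‖f‖ := by
  refine (sq_eq_sq₀ (norm_nonneg _) (norm_nonneg _)).mp ?_
  rw [L2_norm_sq, L2_norm_sq]
  exact (Equiv.subRight v).tsum_eq (fun m => ‖f m‖ ^ 2)

/-- Translation by `v`, `(τ_v f)(m) = f(m - v)`, as an isometry of `ℓ²(ℤ^d)`. -/
def transl {d : ℕ} (v : Fin d → ℤ) : L2 d →ₗᵢ[ℂ] L2 d where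
  toFun f := ⟨fun m => f (m - v), memL2_transl v f⟩
  map_add' f g := by ext m; rfl
  map_smul' c f := by ext m; rfl
  norm_map' f := norm_transl v f

@[simp] lemma transl_apply {d : ℕ} (v : Fin d → ℤ) (f : L2 d) (m : Fin d → ℤ) :
    transl v f m = f (m - v) := rfl

lemma transl_transl {d : ℕ} (v w : Fin d → ℤ) (f : L2 d) :
    transl v (transl w f) = transl (v + w) f := by
  ext m
  simp [sub_sub]

lemma transl_zero {d : ℕ} (f : L2 d) : transl 0 f = f := by
  ext m
  simp

lemma inner_transl {d : ℕ} (v w : Fin d → ℤ) (f g : L2 d) :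
    inner ℂ (transl v f) (transl w g) = inner ℂ f (transl (w - v) g) := by
  rw [← (transl v).inner_map_map f, transl_transl]
  simp

lemma phi_single {d : ℕ} (j : Fin d) (a : ℤ) :
    phi d j (Pi.single j a) = Complex.I * (KK a : ℂ) := by
  unfold phi KK
  rw [if_pos (fun i hi => by simp [hi])]
  simp
  ring

/-- The discrete partial derivative as an absolutely convergent series of translations. -/
lemma pd_eq {d : ℕ} (j : Fin d) (f : L2 d) (m : Fin d → ℤ) :
    pd j f m = (Complex.I • ∑' a : ℤ, (KK a : ℂ) • transl (Pi.single j a) f : L2 d) m := by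
  have hs : Summable (fun a : ℤ => (KK a : ℂ) • transl (Pi.single j a) f) := by
    refine Summable.of_norm ?_
    simp only [norm_smul, LinearIsometry.norm_map, Complex.norm_real]
    exact summable_KK.norm.mul_right _
  have hev : ((∑' a : ℤ, (KK a : ℂ) • transl (Pi.single j a) f : L2 d)) m =
      ∑' a : ℤ, (KK a : ℂ) * f (m - Pi.single j a) := by
    let ev : L2 d →+ ℂ := (Pi.evalAddMonoidHom (fun _ => ℂ) m).comp (lp.coeFnAddMonoidHom _ 2)
    have hc : Continuous ev := (lp.lipschitzWith_one_eval (E := fun _ => ℂ) 2 m).continuous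
    exact (hs.hasSum.map ev hc).tsum_eq.symm
  have hinj : Function.Injective (fun a : ℤ => (Pi.single j a : Fin d → ℤ)) :=
    Pi.single_injective (M := fun _ => ℤ) j
  rw [lp.coeFn_smul, Pi.smul_apply, hev, smul_eq_mul, ← tsum_mul_left]
  unfold pd dconv
  rw [← (Equiv.subLeft m).tsum_eq]
  simp only [Equiv.subLeft_apply, sub_sub_cancel]
  rw [← hinj.tsum_eq]
  · refine tsum_congr (fun a => ?_)
    rw [phi_single]
    ring
  · intro k hk
    have hphi : phi d j k ≠ 0 := fun h => hk (by simp [h])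
    unfold phi at hphi
    have hk' : ∀ i, i ≠ j → k i = 0 := by
      by_contra h
      exact hphi (if_neg h)
    refine ⟨k j, ?_⟩
    ext i
    by_cases hi : i = j
    · subst hi; simp
    · simp [hi, hk' i hi]

lemma tsum_nnnorm_sq {d : ℕ} (f : L2 d) :
    ∑' m, (‖f m‖₊ : ℝ≥0∞) ^ 2 = ENNReal.ofReal (‖f‖ ^ 2) := by
  rw [L2_norm_sq, ENNReal.ofReal_tsum_of_nonneg (fun m => sq_nonneg _) (L2_summable f)]
  refine tsum_congr (fun m => ?_)
  rw [ENNReal.ofReal_pow (norm_nonneg _), ofReal_norm]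
  rfl

/-- The discrete derivative `∂ⱼ f` and the finite difference `f(· - eⱼ) - f` have the same
`ℓ²` norm: both have Fourier multipliers of modulus `2|sin(θⱼ/2)|`. -/
lemma tsum_pd_sq {d : ℕ} (j : Fin d) (f : L2 d) :
    ∑' m, (‖pd j f m‖₊ : ℝ≥0∞) ^ 2 =
      ENNReal.ofReal (‖transl (Pi.single j 1) f - f‖ ^ 2) := by
  simp only [pd_eq]
  rw [tsum_nnnorm_sq, norm_smul, Complex.norm_I, one_mul,
    norm_sq_tsum_KK (fun a => transl (Pi.single j a) f) ‖f‖ (fun a => by simp), Pi.single_zero,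
    transl_zero]
  intro a b
  rw [inner_transl, Pi.single_zero, transl_zero, Pi.single_sub]

lemma lpn_two_eq {d : ℕ} (f : (Fin d → ℤ) → ℂ) :
    lpn 2 f = (∑' m, (‖f m‖₊ : ℝ≥0∞) ^ 2) ^ (1 / 2 : ℝ) := by
  unfold lpn
  rw [if_neg (by norm_num)]
  simp

lemma lpn_two {d : ℕ} (f : L2 d) : lpn 2 f = ENNReal.ofReal ‖f‖ := by
  rw [lpn_two_eq, tsum_nnnorm_sq, ENNReal.ofReal_rpow_of_nonneg (sq_nonneg _) (by norm_num),
    ← Real.sqrt_eq_rpow, Real.sqrt_sq (norm_nonneg _)]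

lemma w2_zero {d : ℕ} (f : (Fin d → ℤ) → ℂ) : w2 0 f = lpn 2 f := by
  simp [w2]

lemma memL2_of_w2 {d : ℕ} {f : (Fin d → ℤ) → ℂ} (h : w2 0 f < ⊤) : Memℓp f 2 := by
  rw [w2_zero, lpn_two_eq] at h
  rw [memL2_iff]
  have h2 : ∑' m, (‖f m‖₊ : ℝ≥0∞) ^ 2 ≠ ⊤ := by
    intro h3
    rw [h3] at h
    simp at h
  have h3 : ∑' m, ((‖f m‖₊ ^ 2 : ℝ≥0) : ℝ≥0∞) ≠ ⊤ := by simpa using h2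
  have := ENNReal.tsum_coe_ne_top_iff_summable.mp h3
  simpa using NNReal.summable_coe.mpr this

/-! ### Curves in `ℓ²` -/

open scoped Classical in
/-- A function on `ℤ^d` as an element of `ℓ²(ℤ^d)`, with junk value `0` if it is not
square-summable. -/
def toL2 {d : ℕ} (f : (Fin d → ℤ) → ℂ) : L2 d :=
  if h : Memℓp f 2 then ⟨f, h⟩ else 0

lemma coe_toL2 {d : ℕ} {f : (Fin d → ℤ) → ℂ} (h : w2 0 f < ⊤) :
    (toL2 f : (Fin d → ℤ) → ℂ) = f := by
  rw [toL2, dif_pos (memL2_of_w2 h)]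

lemma ContW.continuousOn {d : ℕ} {S : Set ℝ} {f : ℝ → (Fin d → ℤ) → ℂ}
    (hm : ∀ t ∈ S, w2 0 (f t) < ⊤) (h : ContW 0 S f) :
    ContinuousOn (fun t => toL2 (f t)) S := by
  intro t ht
  refine tendsto_iff_norm_sub_tendsto_zero.mpr ?_
  have h1 := (ENNReal.tendsto_toReal ENNReal.zero_ne_top).comp (h t ht)
  rw [ENNReal.toReal_zero] at h1
  refine h1.congr' ?_
  filter_upwards [self_mem_nhdsWithin] with s hs
  have e : (fun m => f s m - f t m) = (toL2 (f s) - toL2 (f t) : L2 d) := by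
    rw [lp.coeFn_sub, coe_toL2 (hm s hs), coe_toL2 (hm t ht)]
    rfl
  simp only [Function.comp_apply]
  rw [e, w2_zero, lpn_two, ENNReal.toReal_ofReal (norm_nonneg _)]

lemma DerivW.hasDerivWithinAt {d : ℕ} {S : Set ℝ} {f f' : ℝ → (Fin d → ℤ) → ℂ}
    (hm : ∀ t ∈ S, w2 0 (f t) < ⊤) (hm' : ∀ t ∈ S, w2 0 (f' t) < ⊤) (h : DerivW 0 S f f')
    {t : ℝ} (ht : t ∈ S) :
    HasDerivWithinAt (fun t => toL2 (f t)) (toL2 (f' t)) S t := by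
  rw [hasDerivWithinAt_iff_tendsto_slope]
  refine tendsto_iff_norm_sub_tendsto_zero.mpr ?_
  have h1 := (ENNReal.tendsto_toReal ENNReal.zero_ne_top).comp (h t ht)
  rw [ENNReal.toReal_zero] at h1
  refine h1.congr' ?_
  filter_upwards [self_mem_nhdsWithin] with s hs
  have e : (fun m => (s - t)⁻¹ • (f s m - f t m) - f' t m) =
      ((s - t)⁻¹ • (toL2 (f s) - toL2 (f t)) - toL2 (f' t) : L2 d) := by
    rw [lp.coeFn_sub, lp.coeFn_smul, lp.coeFn_sub, coe_toL2 (hm s hs.1), coe_toL2 (hm t ht),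
      coe_toL2 (hm' t ht)]
    rfl
  simp only [Function.comp_apply]
  rw [e, w2_zero, lpn_two, ENNReal.toReal_ofReal (norm_nonneg _)]
  rfl

/-- The discrete Laplacian on `ℓ²(ℤ^d)`, built from translations. -/
def lapL2 {d : ℕ} (f : L2 d) : L2 d :=
  ∑ j, (transl (-Pi.single j 1) f + transl (Pi.single j 1) f - (2 : ℂ) • f)

lemma coe_lapL2 {d : ℕ} (f : L2 d) (m : Fin d → ℤ) : lapL2 f m = lap f m := by
  rw [lapL2, lp.coeFn_sum, Finset.sum_apply, lap]
  refine Finset.sum_congr rfl (fun j _ => ?_)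
  change f (m - -Pi.single j 1) + f (m - Pi.single j 1) - (2 : ℂ) * f m = _
  rw [sub_neg_eq_add]

lemma continuous_lapL2 {d : ℕ} : Continuous (lapL2 : L2 d → L2 d) := by
  unfold lapL2
  refine continuous_finsetSum _ (fun j _ => ?_)
  exact (((transl _).continuous).add ((transl _).continuous)).sub (continuous_const_smul _)

/-! ### The energy -/

/-- The squared energy `‖v‖² + ∑ⱼ ‖f(· - eⱼ) - f‖²` of the pair `(f, v) = (u, ∂ₜu)`. -/
def energy {d : ℕ} (f v : L2 d) : ℝ :=
  ‖v‖ ^ 2 + ∑ j, ‖transl (Pi.single j 1) f - f‖ ^ 2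

lemma energy_nonneg {d : ℕ} (f v : L2 d) : 0 ≤ energy f v := by
  unfold energy
  positivity

lemma tsum_energy {d : ℕ} (f v : L2 d) :
    ∑' m, ((‖v m‖₊ : ℝ≥0∞) ^ 2 + ∑ j, (‖pd j f m‖₊ : ℝ≥0∞) ^ 2) =
      ENNReal.ofReal (energy f v) := by
  rw [ENNReal.tsum_add, Summable.tsum_finsetSum (fun _ _ => ENNReal.summable), tsum_nnnorm_sq,
    energy, ENNReal.ofReal_add (by positivity) (by positivity),
    ENNReal.ofReal_sum_of_nonneg (fun _ _ => by positivity)]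
  simp only [tsum_pd_sq]

lemma hasDerivWithinAt_norm_sq {d : ℕ} {f : ℝ → L2 d} {f' : L2 d} {S : Set ℝ} {t : ℝ}
    (h : HasDerivWithinAt f f' S t) :
    HasDerivWithinAt (fun s => ‖f s‖ ^ 2) (2 * (inner ℂ (f t) f').re) S t := by
  have h1 := h.inner ℂ h
  have h2 := Complex.reCLM.hasFDerivAt.comp_hasDerivWithinAt t h1
  have e : 2 * (inner ℂ (f t) f').re = Complex.reCLM (inner ℂ (f t) f' + inner ℂ f' (f t)) := by
    have hsymm : (inner ℂ f' (f t)).re = (inner ℂ (f t) f').re := inner_re_symm (𝕜 := ℂ) _ _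
    rw [Complex.reCLM_apply, Complex.add_re, hsymm]
    ring
  rw [e]
  refine h2.congr_of_eventuallyEq (Eventually.of_forall fun s => ?_) ?_ <;>
  · simp only [Function.comp_apply, inner_self_eq_norm_sq_to_K]
    norm_cast

/-- Summation by parts: `Re ⟨D f, D v⟩ = -Re ⟨v, Δⱼ f⟩` for the finite difference `D`. -/
lemma re_inner_diff {d : ℕ} (j : Fin d) (f v : L2 d) :
    (inner ℂ (transl (Pi.single j 1) f - f) (transl (Pi.single j 1) v - v)).re =
      -(inner ℂ v
        (transl (-Pi.single j 1) f + transl (Pi.single j 1) f - (2 : ℂ) • f)).re := by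
  have h1 : inner ℂ (transl (Pi.single j 1) f) (transl (Pi.single j 1) v) = inner ℂ f v :=
    (transl _).inner_map_map f v
  have h2 : inner ℂ v (transl (-Pi.single j 1) f) = inner ℂ (transl (Pi.single j 1) v) f := by
    have := inner_transl (Pi.single j 1) 0 v f
    rw [transl_zero, zero_sub] at this
    exact this.symm
  have hre : ∀ x y : L2 d, (inner ℂ x y).re = (inner ℂ y x).re := fun x y =>
    inner_re_symm (𝕜 := ℂ) x y
  simp only [inner_sub_left, inner_sub_right, inner_add_right, inner_smul_right, h1, h2,
    Complex.sub_re, Complex.add_re]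
  rw [hre f (transl _ v), hre (transl _ f) v, hre f v]
  simp
  ring

/-- The energy identity: the squared energy has derivative `2 Re ⟨∂ₜu, □u⟩`. -/
lemma hasDerivWithinAt_energy {d : ℕ} {U V : ℝ → L2 d} {W : L2 d} {S : Set ℝ} {t : ℝ}
    (hU : HasDerivWithinAt U (V t) S t) (hV : HasDerivWithinAt V W S t) :
    HasDerivWithinAt (fun s => energy (U s) (V s))
      (2 * (inner ℂ (V t) (W - lapL2 (U t))).re) S t := by
  have hD : ∀ j : Fin d, HasDerivWithinAt (fun s => transl (Pi.single j 1) (U s) - U s)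
      (transl (Pi.single j 1) (V t) - V t) S t := by
    intro j
    have := ((transl (d := d) (Pi.single j 1)).toContinuousLinearMap.restrictScalars
      ℝ).hasFDerivAt.comp_hasDerivWithinAt t hU
    exact this.sub hU
  have h := (hasDerivWithinAt_norm_sq hV).add
    (HasDerivWithinAt.fun_sum (u := Finset.univ)
      (fun j _ => hasDerivWithinAt_norm_sq (hD j)))
  refine h.congr_deriv ?_
  simp only [re_inner_diff]
  rw [← Finset.mul_sum, Finset.sum_neg_distrib, inner_sub_right, Complex.sub_re, lapL2, inner_sum,
    Complex.re_sum]
  ring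

/-- The energy estimate for curves in `ℓ²`. The square root of the energy need not be
differentiable where the energy vanishes, so it is first regularised by `ε²`. -/
lemma sqrt_energy_le {d : ℕ} {U V W : ℝ → L2 d} {t : ℝ} (ht : 0 ≤ t)
    (hU : ∀ s ∈ Set.Icc 0 t, HasDerivWithinAt U (V s) (Set.Icc 0 t) s)
    (hV : ∀ s ∈ Set.Icc 0 t, HasDerivWithinAt V (W s) (Set.Icc 0 t) s)
    (hW : ContinuousOn W (Set.Icc 0 t)) :
    Real.sqrt (energy (U t) (V t)) ≤ Real.sqrt (energy (U 0) (V 0)) +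
      ∫ s in (0 : ℝ)..t, ‖W s - lapL2 (U s)‖ := by
  have hUc : ContinuousOn U (Set.Icc 0 t) := fun s hs => (hU s hs).continuousWithinAt
  have hg : ContinuousOn (fun s => ‖W s - lapL2 (U s)‖) (Set.Icc 0 t) :=
    (hW.sub (continuous_lapL2.comp_continuousOn hUc)).norm
  have hE : ∀ s ∈ Set.Icc 0 t, HasDerivWithinAt (fun s => energy (U s) (V s))
      (2 * (inner ℂ (V s) (W s - lapL2 (U s))).re) (Set.Icc 0 t) s :=
    fun s hs => hasDerivWithinAt_energy (hU s hs) (hV s hs)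
  refine le_of_forall_pos_le_add (fun ε hε => ?_)
  have hpos : ∀ s, 0 < energy (U s) (V s) + ε ^ 2 := fun s => by
    have := energy_nonneg (U s) (V s)
    positivity
  have hder : ∀ s ∈ Set.Icc 0 t,
      HasDerivWithinAt (fun s => Real.sqrt (energy (U s) (V s) + ε ^ 2))
        (2 * (inner ℂ (V s) (W s - lapL2 (U s))).re /
          (2 * Real.sqrt (energy (U s) (V s) + ε ^ 2))) (Set.Icc 0 t) s :=
    fun s hs => ((hE s hs).add_const _).sqrt (hpos s).ne'
  have main := intervalIntegral.sub_le_integral_of_hasDeriv_right_of_le ht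
    (fun s hs => (hder s hs).continuousWithinAt)
    (fun s hs => ((hder s (Set.Ioo_subset_Icc_self hs)).hasDerivAt
      (Icc_mem_nhds hs.1 hs.2)).hasDerivWithinAt)
    (hg.integrableOn_Icc) (fun s hs => by
      have hs0 : 0 < Real.sqrt (energy (U s) (V s) + ε ^ 2) := Real.sqrt_pos.mpr (hpos s)
      rw [div_le_iff₀ (by positivity)]
      have h1 : (inner ℂ (V s) (W s - lapL2 (U s))).re ≤ ‖V s‖ * ‖W s - lapL2 (U s)‖ :=
        (Complex.re_le_norm _).trans (norm_inner_le_norm _ _)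
      have h2 : ‖V s‖ ≤ Real.sqrt (energy (U s) (V s) + ε ^ 2) := by
        refine Real.le_sqrt_of_sq_le ?_
        have : 0 ≤ ∑ j, ‖transl (Pi.single j 1) (U s) - U s‖ ^ 2 := by positivity
        unfold energy
        nlinarith [sq_nonneg ε]
      have h3 := mul_le_mul_of_nonneg_right h2 (norm_nonneg (W s - lapL2 (U s)))
      linarith)
  have h1 : Real.sqrt (energy (U t) (V t)) ≤ Real.sqrt (energy (U t) (V t) + ε ^ 2) :=
    Real.sqrt_le_sqrt (by nlinarith [sq_nonneg ε])
  have h2 : Real.sqrt (energy (U 0) (V 0) + ε ^ 2) ≤ Real.sqrt (energy (U 0) (V 0)) + ε := by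
    refine Real.sqrt_le_iff.mpr ⟨by positivity, ?_⟩
    nlinarith [Real.sq_sqrt (energy_nonneg (U 0) (V 0)), Real.sqrt_nonneg (energy (U 0) (V 0))]
  linarith

/-- sharp energy estimate for the discrete d'Alembert operator
`□ = ∂ₜ² - Δ`: `‖u'(·,t)‖_{ℓ²} ≤ ‖u'(·,0)‖_{ℓ²} + ∫₀ᵗ ‖□u(·,s)‖_{ℓ²} ds`,
where `‖u'(·,t)‖²_{ℓ²} = Σ_m(|∂ₜu(m,t)|² + Σⱼ|∂ⱼu(m,t)|²)`. -/
theorem stmt19 (d : ℕ) (hd : 0 < d) (T : ℝ) (hT : 0 < T)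
    (u u1 u2 : ℝ → (Fin d → ℤ) → ℂ)
    (hu : IsC2 0 (Set.Icc 0 T) u u1 u2) :
    ∀ t ∈ Set.Icc (0 : ℝ) T,
      (∑' m, ((‖u1 t m‖₊ : ℝ≥0∞) ^ 2 + ∑ j, (‖pd j (u t) m‖₊ : ℝ≥0∞) ^ 2)) ^ (1 / 2 : ℝ) ≤
        (∑' m, ((‖u1 0 m‖₊ : ℝ≥0∞) ^ 2 + ∑ j, (‖pd j (u 0) m‖₊ : ℝ≥0∞) ^ 2)) ^ (1 / 2 : ℝ) +
          ∫⁻ s in Set.Icc (0 : ℝ) t, lpn 2 (fun x => u2 s x - lap (u s) x) := by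
  intro t ht
  have hsub : Set.Icc (0 : ℝ) t ⊆ Set.Icc 0 T := Set.Icc_subset_Icc_right ht.2
  have h0 : (0 : ℝ) ∈ Set.Icc (0 : ℝ) T := ⟨le_rfl, hT.le⟩
  have hUd : ∀ s ∈ Set.Icc 0 t,
      HasDerivWithinAt (fun s => toL2 (u s)) (toL2 (u1 s)) (Set.Icc 0 t) s := fun s hs =>
    (hu.hder1.hasDerivWithinAt hu.mem0 hu.mem1 (hsub hs)).mono hsub
  have hVd : ∀ s ∈ Set.Icc 0 t,
      HasDerivWithinAt (fun s => toL2 (u1 s)) (toL2 (u2 s)) (Set.Icc 0 t) s := fun s hs =>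
    (hu.hder2.hasDerivWithinAt hu.mem1 hu.mem2 (hsub hs)).mono hsub
  have hWc : ContinuousOn (fun s => toL2 (u2 s)) (Set.Icc 0 t) :=
    (hu.cont2.continuousOn hu.mem2).mono hsub
  have hUc : ContinuousOn (fun s => toL2 (u s)) (Set.Icc 0 t) :=
    (hu.cont0.continuousOn hu.mem0).mono hsub
  have hg : ContinuousOn (fun s => ‖toL2 (u2 s) - lapL2 (toL2 (u s))‖) (Set.Icc 0 t) :=
    (hWc.sub (continuous_lapL2.comp_continuousOn hUc)).norm
  have main := sqrt_energy_le ht.1 hUd hVd hWc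
  have hen : ∀ s ∈ Set.Icc (0 : ℝ) T,
      (∑' m, ((‖u1 s m‖₊ : ℝ≥0∞) ^ 2 + ∑ j, (‖pd j (u s) m‖₊ : ℝ≥0∞) ^ 2)) ^ (1 / 2 : ℝ) =
        ENNReal.ofReal (Real.sqrt (energy (toL2 (u s)) (toL2 (u1 s)))) := by
    intro s hs
    have h := tsum_energy (toL2 (u s)) (toL2 (u1 s))
    rw [coe_toL2 (hu.mem0 s hs), coe_toL2 (hu.mem1 s hs)] at h
    rw [h, ENNReal.ofReal_rpow_of_nonneg (energy_nonneg _ _) (by norm_num), ← Real.sqrt_eq_rpow]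
  have hint : ∫⁻ s in Set.Icc (0 : ℝ) t, lpn 2 (fun x => u2 s x - lap (u s) x) =
      ENNReal.ofReal (∫ s in (0 : ℝ)..t, ‖toL2 (u2 s) - lapL2 (toL2 (u s))‖) := by
    rw [intervalIntegral.integral_of_le ht.1, ← integral_Icc_eq_integral_Ioc,
      ofReal_integral_eq_lintegral_ofReal hg.integrableOn_Icc
        (Eventually.of_forall fun s => norm_nonneg _)]
    refine setLIntegral_congr_fun measurableSet_Icc (fun s hs => ?_)
    have e : (fun x => u2 s x - lap (u s) x) = (toL2 (u2 s) - lapL2 (toL2 (u s)) : L2 d) := by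
      ext x
      rw [lp.coeFn_sub, Pi.sub_apply, coe_lapL2, coe_toL2 (hu.mem0 s (hsub hs)),
        coe_toL2 (hu.mem2 s (hsub hs))]
    simp only [e, lpn_two]
  rw [hen t ht, hen 0 h0, hint, ← ENNReal.ofReal_add (Real.sqrt_nonneg _)
    (intervalIntegral.integral_nonneg ht.1 fun s _ => norm_nonneg _)]
  exact ENNReal.ofReal_le_ofReal main
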